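/- arXiv:0909.4865 — 2 statements merged into one kernel-verified Lean document; each statement's English description precedes it below -/
import Mathlib

section
/- Let f be a real binary form of degree d with 3 ≤ d ≤ 5 and with distinct roots (squarefree over ℂ). If for every (a,b) ≠ (0,0) the real binary form a·∂f/∂x + b·∂f/∂y of degree d−1 has d−1 distinct real roots, then f has d distinct real roots. -/
open MvPolynomial

noncomputable section

/-- The real linear binary form `a·x + b·y`. -/
def lin (a b : ℝ) : MvPolynomial (Fin 2) ℝ := C a * X 0 + C b * X 1

/-- `f` is a sum of `r` terms `cⱼ · ℓⱼ^d` with `ℓⱼ` nonzero real linear forms. -/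
def HasDecomp (f : MvPolynomial (Fin 2) ℝ) (d r : ℕ) : Prop :=
  ∃ c a b : Fin r → ℝ, (∀ j, (a j, b j) ≠ (0, 0)) ∧
    f = ∑ j, C (c j) * lin (a j) (b j) ^ d

/-- The real (symmetric) rank of a binary form of degree `d`:
the least number of `d`-th powers of real linear forms needed to write `f`. -/
def realRank (f : MvPolynomial (Fin 2) ℝ) (d : ℕ) : ℕ :=
  sInf {r | HasDecomp f d r}

/-- The set of real projective roots of a binary form. -/
def projRoots (f : MvPolynomial (Fin 2) ℝ) : Set (Projectivization ℝ (Fin 2 → ℝ)) :=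
  {p | eval p.rep f = 0}

/-- `f` is a product of `d` pairwise non-proportional real linear forms,
i.e. `f` has `d` distinct real roots. -/
def SplitsDistinct (f : MvPolynomial (Fin 2) ℝ) (d : ℕ) : Prop :=
  ∃ a b : Fin d → ℝ, (∀ j, (a j, b j) ≠ (0, 0)) ∧
    (∀ i j, i ≠ j → a i * b j ≠ a j * b i) ∧
    f = ∏ j, lin (a j) (b j)

/-- `f` has distinct roots, i.e. it is squarefree as a complex polynomial. -/
def SquarefreeC (f : MvPolynomial (Fin 2) ℝ) : Prop :=
  Squarefree (MvPolynomial.map (algebraMap ℝ ℂ) f)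

/-- The linear change of variables of `f` by the matrix `A`: `f(A(x,y))`. -/
def subst (A : Matrix (Fin 2) (Fin 2) ℝ) (f : MvPolynomial (Fin 2) ℝ) :
    MvPolynomial (Fin 2) ℝ :=
  aeval (fun i => C (A i 0) * X 0 + C (A i 1) * X 1) f

/-- The complex rank of a real binary form of degree `d`. -/
def complexRank (f : MvPolynomial (Fin 2) ℝ) (d : ℕ) : ℕ :=
  sInf {r | ∃ a b : Fin r → ℂ, (∀ j, (a j, b j) ≠ (0, 0)) ∧
    MvPolynomial.map (algebraMap ℝ ℂ) f = ∑ j, (C (a j) * X 0 + C (b j) * X 1) ^ d}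

/-!
A nonzero kernel vector `q` of the Hessian matrix of `f` at a real point `p` gives a polar of `f`
with a multiple root at `p`, so under the hypothesis the Hessian determinant has no real zero. For
the restriction `g` of `f` to an affine line this means, by Euler's identity, that
`d * g * g'' - (d - 1) * g' ^ 2` vanishes nowhere. By Rolle's theorem `g''` has a zero, which fixes
the sign and yields the Laguerre inequality `g * g'' < g' ^ 2`. Hence `g' / g` is strictly
decreasing away from the roots of `g`, so `g` has a root between any two consecutive critical points
and one beyond each extreme critical point: `d - 1` critical points force `d` roots.
-/

section Univariate

open scoped Polynomial

theorem card_toFinset_roots_lt_natDegree {R : Type*} [CommRing R] [IsDomain R] [DecidableEq R]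
    {q : R[X]} (hq : q ≠ 0) {t : R} (ht : q.IsRoot t) (ht' : q.derivative.IsRoot t) :
    q.roots.toFinset.card < q.natDegree := by
  have hmult : 1 < q.roots.count t := by
    rw [Polynomial.count_roots, Polynomial.one_lt_rootMultiplicity_iff_isRoot hq]
    exact ⟨ht, ht'⟩
  have hdup : ¬ q.roots.Nodup := fun h => hmult.not_ge (Multiset.nodup_iff_count_le_one.1 h t)
  have hlt : q.roots.toFinset.card < q.roots.card :=
    (Multiset.toFinset_card_le _).lt_of_ne fun h =>
      hdup (Multiset.toFinset_card_eq_card_iff_nodup.1 h)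
  exact hlt.trans_le q.card_roots'

variable {g : ℝ[X]}

theorem exists_lt_eval_mul_eval_derivative_neg (hdeg : 0 < g.degree) (m : ℝ) :
    ∃ a < m, g.eval a * g.derivative.eval a < 0 := by
  obtain ⟨b, hgb, hbm⟩ := (((g.abs_tendsto_atBot hdeg).eventually_gt_atTop |g.eval m|).and
    (Filter.eventually_lt_atBot m)).exists
  obtain ⟨a, ⟨-, ham⟩, ha⟩ := exists_hasDerivAt_eq_slope _ _ hbm (g ^ 2).continuous.continuousOn
    fun x _ => (g ^ 2).hasDerivAt x
  refine ⟨a, ham, ?_⟩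
  have hslope : ((g ^ 2).eval m - (g ^ 2).eval b) / (m - b) < 0 := by
    refine div_neg_of_neg_of_pos ?_ (sub_pos.2 hbm)
    simpa only [Polynomial.eval_pow, sub_neg, sq_lt_sq] using hgb
  rw [← ha, Polynomial.derivative_sq] at hslope
  simp only [Polynomial.eval_mul, Polynomial.eval_C] at hslope
  linarith

theorem exists_gt_eval_mul_eval_derivative_pos (hdeg : 0 < g.degree) (m : ℝ) :
    ∃ b > m, 0 < g.eval b * g.derivative.eval b := by
  obtain ⟨a, ham, ha⟩ := exists_lt_eval_mul_eval_derivative_neg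
    (g := g.comp (-Polynomial.X)) (by simpa using hdeg) (-m)
  refine ⟨-a, lt_neg.1 ham, ?_⟩
  simpa [Polynomial.derivative_comp] using ha

theorem exists_eval_eq_zero_of_laguerre
    (hg : ∀ t, g.eval t * g.derivative.derivative.eval t < g.derivative.eval t ^ 2)
    {a b : ℝ} (hab : a < b) (ha₀ : g.eval a ≠ 0) (hb₀ : g.eval b ≠ 0)
    (ha : g.eval a * g.derivative.eval a ≤ 0) (hb : 0 ≤ g.eval b * g.derivative.eval b) :
    ∃ t ∈ Set.Ioo a b, g.eval t = 0 := by
  by_contra! hno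
  have hne : ∀ t ∈ Set.Icc a b, g.eval t ≠ 0 := fun t ht => by
    rcases Set.eq_endpoints_or_mem_Ioo_of_mem_Icc ht with rfl | rfl | ht
    exacts [ha₀, hb₀, hno t ht]
  have hanti : StrictAntiOn (g.derivative.eval / g.eval) (Set.Icc a b) := by
    refine strictAntiOn_of_deriv_neg (convex_Icc a b)
      (g.derivative.continuousOn.div g.continuousOn hne) fun t ht => ?_
    rw [interior_Icc] at ht
    rw [((g.derivative.hasDerivAt t).div (g.hasDerivAt t) (hno t ht)).deriv]
    refine div_neg_of_neg_of_pos ?_ (sq_pos_of_ne_zero (hno t ht))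
    linarith [hg t]
  have hlt := hanti (Set.left_mem_Icc.2 hab.le) (Set.right_mem_Icc.2 hab.le) hab
  rw [mul_comm, mul_nonpos_iff, ← div_nonpos_iff] at ha
  rw [mul_comm, mul_nonneg_iff, ← div_nonneg_iff] at hb
  exact hlt.not_ge (ha.trans hb)

theorem laguerre_of_ne {d : ℝ} (hd : 1 ≤ d)
    (hne : ∀ t, d * (g.eval t * g.derivative.derivative.eval t) ≠
      (d - 1) * g.derivative.eval t ^ 2)
    (hinfl : ∃ t, g.derivative.derivative.eval t = 0) (t : ℝ) :
    g.eval t * g.derivative.derivative.eval t < g.derivative.eval t ^ 2 := by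
  obtain ⟨t₀, ht₀⟩ := hinfl
  have hlt : d * (g.eval t * g.derivative.derivative.eval t) <
      (d - 1) * g.derivative.eval t ^ 2 := by
    by_contra! hge
    obtain ⟨s, -, hs⟩ := isPreconnected_univ.intermediate_value₂ (Set.mem_univ t₀)
      (Set.mem_univ t)
      (f := fun t => d * (g.eval t * g.derivative.derivative.eval t))
      (g := fun t => (d - 1) * g.derivative.eval t ^ 2) (by fun_prop) (by fun_prop)
      (by
        rw [ht₀, mul_zero, mul_zero]
        exact mul_nonneg (sub_nonneg.2 hd) (sq_nonneg _)) hge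
    exact hne s hs
  nlinarith [sq_nonneg (g.derivative.eval t)]

theorem card_roots_derivative_lt_card_roots_of_laguerre (hdeg : 0 < g.degree)
    (hg : ∀ t, g.eval t * g.derivative.derivative.eval t < g.derivative.eval t ^ 2) :
    g.derivative.roots.toFinset.card < g.roots.toFinset.card := by
  have hg₀ : g ≠ 0 := Polynomial.ne_zero_of_degree_gt hdeg
  set crit := g.derivative.roots.toFinset
  have hcrit : ∀ c ∈ crit, g.derivative.eval c = 0 := fun c hc =>
    (Polynomial.mem_roots'.1 (Multiset.mem_toFinset.1 hc)).2
  obtain ⟨m, hm⟩ := crit.bddBelow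
  obtain ⟨M, hM⟩ := crit.bddAbove
  obtain ⟨a, ham, ha⟩ := exists_lt_eval_mul_eval_derivative_neg hdeg m
  obtain ⟨b, hbM, hb⟩ := exists_gt_eval_mul_eval_derivative_pos hdeg (max a M)
  rw [gt_iff_lt, max_lt_iff] at hbM
  have hac : ∀ c ∈ crit, a < c := fun c hc => ham.trans_le (hm hc)
  have hcb : ∀ c ∈ crit, c < b := fun c hc => (hM hc).trans_lt hbM.2
  have hne : ∀ x ∈ insert a (insert b crit), g.eval x ≠ 0 := by
    simp only [Finset.forall_mem_insert]
    refine ⟨left_ne_zero_of_mul ha.ne, left_ne_zero_of_mul hb.ne', fun c hc h => ?_⟩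
    simpa [h, hcrit c hc] using hg c
  have hleft : ∀ x ∈ insert a (insert b crit), x < b → g.eval x * g.derivative.eval x ≤ 0 := by
    simp only [Finset.forall_mem_insert]
    exact ⟨fun _ => ha.le, fun h => (h.false).elim, fun c hc _ => by simp [hcrit c hc]⟩
  have hright : ∀ y ∈ insert a (insert b crit), a < y → 0 ≤ g.eval y * g.derivative.eval y := by
    simp only [Finset.forall_mem_insert]
    exact ⟨fun h => (h.false).elim, fun _ => hb.le, fun c hc _ => by simp [hcrit c hc]⟩
  have hmem_Icc : ∀ x ∈ insert a (insert b crit), a ≤ x ∧ x ≤ b := by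
    simp only [Finset.forall_mem_insert]
    exact ⟨⟨le_rfl, hbM.1.le⟩, ⟨hbM.1.le, le_rfl⟩, fun c hc => ⟨(hac c hc).le, (hcb c hc).le⟩⟩
  have hinterleaved : (insert a (insert b crit)).card ≤ g.roots.toFinset.card + 1 := by
    refine Finset.card_le_of_interleaved fun x hx y hy hxy _ => ?_
    obtain ⟨z, hz, hgz⟩ := exists_eval_eq_zero_of_laguerre hg hxy (hne x hx) (hne y hy)
      (hleft x hx (hxy.trans_le (hmem_Icc y hy).2)) (hright y hy ((hmem_Icc x hx).1.trans_lt hxy))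
    exact ⟨z, by simpa [hg₀] using hgz, hz⟩
  rw [Finset.card_insert_of_notMem, Finset.card_insert_of_notMem] at hinterleaved
  · lia
  · exact fun h => (hcb b h).false
  · rw [Finset.mem_insert, not_or]
    exact ⟨hbM.1.ne, fun h => (hac a h).false⟩

end Univariate

section Polar

variable {σ R : Type*} [CommSemiring R]

/-- The first polar of `f` with respect to `v`, i.e. the derivative `∑ i, v i • ∂f/∂xᵢ` of `f` in
the constant direction `v`, encoded as the derivation sending `X i` to `C (v i)`. -/
def polar (v : σ → R) : Derivation R (MvPolynomial σ R) (MvPolynomial σ R) :=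
  mkDerivation R fun i => C (v i)

@[simp]
theorem polar_X (v : σ → R) (i : σ) : polar v (X i) = C (v i) :=
  mkDerivation_X _ _ _

theorem polar_smul_add_smul (α β : R) (v w : σ → R) (f : MvPolynomial σ R) :
    polar (α • v + β • w) f = α • polar v f + β • polar w f := by
  have h : polar (α • v + β • w) = α • polar v + β • polar w :=
    derivation_ext fun i => by simp [smul_eq_C_mul]
  rw [h]
  rfl

theorem polar_comm {R : Type*} [CommRing R] (v w : σ → R) (f : MvPolynomial σ R) :
    polar v (polar w f) = polar w (polar v f) := by
  have h : ⁅polar v, polar w⁆ = 0 := derivation_ext fun i => by simp [Derivation.commutator_apply]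
  rw [← sub_eq_zero, ← Derivation.commutator_apply, h, Derivation.zero_apply]

theorem polar_eq_sum [Fintype σ] (v : σ → R) (f : MvPolynomial σ R) :
    polar v f = ∑ i, C (v i) * pderiv i f := by
  classical
  induction f using MvPolynomial.induction_on with
  | C a => simp [← algebraMap_eq]
  | add p q hp hq => simp only [map_add, mul_add, Finset.sum_add_distrib, hp, hq]
  | mul_X p j hp =>
    simp [hp, pderiv_X, Pi.single_apply, mul_add, Finset.sum_add_distrib, Finset.mul_sum,
      mul_left_comm, mul_comm p]

variable {n : ℕ} {F : MvPolynomial σ R}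

theorem isHomogeneous_polar [Finite σ] (hF : F.IsHomogeneous n) (v : σ → R) :
    (polar v F).IsHomogeneous (n - 1) := by
  have := Fintype.ofFinite σ
  rw [polar_eq_sum]
  exact IsHomogeneous.sum _ _ _ fun i _ => hF.pderiv.C_mul (v i)

theorem eval_polar_self [Finite σ] (hF : F.IsHomogeneous n) (p : σ → R) :
    eval p (polar p F) = n * eval p F := by
  have := Fintype.ofFinite σ
  simpa [polar_eq_sum] using congrArg (eval p) hF.sum_X_mul_pderiv

theorem eval_smul_of_isHomogeneous (hF : F.IsHomogeneous n) (c : R) (x : σ → R) :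
    eval (c • x) F = c ^ n * eval x F := by
  simp only [eval_eq, Finset.mul_sum, Pi.smul_apply, smul_eq_mul, mul_pow, Finset.prod_mul_distrib,
    Finset.prod_pow_eq_pow_sum]
  refine Finset.sum_congr rfl fun m hm => ?_
  have hdeg : ∑ i ∈ m.support, m i = n := by
    rw [← hF (mem_support_iff.1 hm)]
    simp [Finsupp.weight_apply, Finsupp.sum]
  rw [hdeg, mul_left_comm]

end Polar

theorem exists_eval_ne_zero {R : Type*} [CommRing R] [IsDomain R] [Infinite R] {σ : Type*}
    {F : MvPolynomial σ R} (hF : F ≠ 0) : ∃ v, eval v F ≠ 0 := by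
  by_contra! h
  exact hF (MvPolynomial.funext fun v => by simpa using h v)

section LineRestriction

variable {σ R : Type*} [CommSemiring R]

/-- The restriction of a polynomial to the affine line `t ↦ t • v + w`, as a polynomial in the
parameter `t`. -/
def lineRestriction (v w : σ → R) : MvPolynomial σ R →ₐ[R] Polynomial R :=
  aeval fun i => Polynomial.C (v i) * Polynomial.X + Polynomial.C (w i)

theorem lineRestriction_C (v w : σ → R) (a : R) :
    lineRestriction v w (C a) = Polynomial.C a :=
  aeval_C _ _

theorem lineRestriction_X (v w : σ → R) (i : σ) :
    lineRestriction v w (X i) = Polynomial.C (v i) * Polynomial.X + Polynomial.C (w i) :=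
  aeval_X _ _

theorem eval_lineRestriction (v w : σ → R) (f : MvPolynomial σ R) (t : R) :
    (lineRestriction v w f).eval t = eval (t • v + w) f := by
  have h : (Polynomial.aeval t).comp (lineRestriction v w) = aeval (t • v + w) :=
    algHom_ext fun i => by simp [lineRestriction_X, mul_comm t]
  simpa using DFunLike.congr_fun h f

theorem derivative_lineRestriction (v w : σ → R) (f : MvPolynomial σ R) :
    (lineRestriction v w f).derivative = lineRestriction v w (polar v f) := by
  induction f using MvPolynomial.induction_on with
  | C a => simp
  | add p q hp hq => simp only [map_add, hp, hq]
  | mul_X p i hp =>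
    simp only [map_mul, map_add, Derivation.leibniz, smul_eq_mul, polar_X, lineRestriction_X,
      lineRestriction_C, Polynomial.derivative_mul, Polynomial.derivative_C,
      Polynomial.derivative_X, hp]
    ring

theorem natDegree_lineRestriction_le {n : ℕ} {F : MvPolynomial σ R} (hF : F.IsHomogeneous n)
    (v w : σ → R) : (lineRestriction v w F).natDegree ≤ n := by
  simpa [lineRestriction] using aeval_natDegree_le F hF.totalDegree_le _
    fun i => Polynomial.natDegree_linear_le (a := v i) (b := w i)

-- By homogeneity `F (s • w + v) = s ^ n * F (s⁻¹ • v + w)` for `s ≠ 0`.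
theorem lineRestriction_ne_zero {K : Type*} [Field K] [Infinite K] {n : ℕ}
    {F : MvPolynomial σ K} (hF : F.IsHomogeneous n) {v : σ → K} (hv : eval v F ≠ 0) (w : σ → K) :
    lineRestriction v w F ≠ 0 := by
  intro h
  have hzero : ∀ s : K, s ≠ 0 → eval (s • w + v) F = 0 := fun s hs => by
    rw [show s • w + v = s • (s⁻¹ • v + w) by rw [smul_add, smul_inv_smul₀ hs, add_comm],
      eval_smul_of_isHomogeneous hF, ← eval_lineRestriction, h, Polynomial.eval_zero, mul_zero]
  have hreversed : lineRestriction w v F = 0 :=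
    Polynomial.eq_zero_of_infinite_isRoot _ <| (Set.finite_singleton 0).infinite_compl.mono
      fun s hs => (eval_lineRestriction w v F s).trans (hzero s hs)
  apply hv
  simpa [hreversed] using (eval_lineRestriction w v F 0).symm

end LineRestriction

section AffineChart

open scoped LinearAlgebra.Projectivization

variable {K V : Type*} [Field K] [AddCommGroup V] [Module K V] {v w : V}

theorem smul_add_ne_zero (h : LinearIndependent K ![v, w]) (t : K) : t • v + w ≠ 0 := fun h₀ =>
  one_ne_zero (LinearIndependent.pair_iff.1 h t 1 (by rwa [one_smul])).2

/-- The affine chart `t ↦ [t • v + w]` of the projective line through `[v]` and `[w]`; it misses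
only the point `[v]`. -/
def affineChart (h : LinearIndependent K ![v, w]) (t : K) : ℙ K V :=
  .mk K (t • v + w) (smul_add_ne_zero h t)

theorem affineChart_injective (h : LinearIndependent K ![v, w]) :
    Function.Injective (affineChart h) := by
  intro s t hst
  obtain ⟨a, ha⟩ := (Projectivization.mk_eq_mk_iff' K _ _ _ _).1 hst
  obtain ⟨hv, hw⟩ := LinearIndependent.pair_iff.1 h (a * t - s) (a - 1) (by
    rw [sub_smul, sub_smul, mul_smul, sub_add_sub_comm, ← smul_add, ha, one_smul, sub_self])
  rw [sub_eq_zero] at hv hw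
  rw [← hv, hw, one_mul]

theorem exists_smul_add_smul_eq (hV : Module.finrank K V = 2) (h : LinearIndependent K ![v, w])
    (x : V) : ∃ α β : K, α • v + β • w = x := by
  have : FiniteDimensional K V := .of_finrank_eq_succ hV
  have hspan := h.span_eq_top_of_card_eq_finrank' (by simp [hV])
  rw [Matrix.range_cons_cons_empty] at hspan
  exact Submodule.mem_span_pair.1 (hspan ▸ Submodule.mem_top)

theorem mem_range_affineChart (hV : Module.finrank K V = 2) (h : LinearIndependent K ![v, w])
    {p : ℙ K V} (hp : p ≠ .mk K v (h.ne_zero 0)) : p ∈ Set.range (affineChart h) := by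
  induction p using Projectivization.ind with
  | h x hx =>
    obtain ⟨α, β, rfl⟩ := exists_smul_add_smul_eq hV h x
    have hβ : β ≠ 0 := by
      rintro rfl
      exact hp ((Projectivization.mk_eq_mk_iff' K _ _ _ _).2 ⟨α, by simp⟩)
    refine ⟨β⁻¹ * α, (Projectivization.mk_eq_mk_iff' K _ _ _ _).2 ⟨β⁻¹, ?_⟩⟩
    rw [smul_add, smul_smul, inv_smul_smul₀ hβ]

end AffineChart

section ProjRoots

theorem mk_mem_projRoots {n : ℕ} {F : MvPolynomial (Fin 2) ℝ} (hF : F.IsHomogeneous n)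
    {x : Fin 2 → ℝ} (hx : x ≠ 0) : .mk ℝ x hx ∈ projRoots F ↔ eval x F = 0 := by
  obtain ⟨a, ha⟩ := Projectivization.exists_smul_eq_mk_rep ℝ x hx
  rw [projRoots, Set.mem_ofPred_eq, ← ha, Units.smul_def, eval_smul_of_isHomogeneous hF]
  simp

-- `Set.ncard` of an infinite set is `0`.
theorem ncard_projRoots_zero : (projRoots 0).ncard = 0 := by
  obtain ⟨w, hw⟩ := exists_linearIndependent_pair_of_one_lt_finrank (R := ℝ)
    (M := Fin 2 → ℝ) (by simp) (x := 1) one_ne_zero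
  have : Infinite (Projectivization ℝ (Fin 2 → ℝ)) := .of_injective _ (affineChart_injective hw)
  simp [projRoots, Set.infinite_univ.ncard]

variable {n : ℕ} {F : MvPolynomial (Fin 2) ℝ} {v w : Fin 2 → ℝ}

theorem ncard_projRoots_eq_card_roots (hF : F.IsHomogeneous n) (h : LinearIndependent ℝ ![v, w])
    (hv : eval v F ≠ 0) : (projRoots F).ncard = (lineRestriction v w F).roots.toFinset.card := by
  have himage : projRoots F = affineChart h '' (lineRestriction v w F).roots.toFinset := by
    have hmem (t : ℝ) : affineChart h t ∈ projRoots F ↔ (lineRestriction v w F).eval t = 0 := by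
      rw [affineChart, mk_mem_projRoots hF, eval_lineRestriction]
    ext p
    constructor
    · intro hp
      obtain ⟨t, rfl⟩ : p ∈ Set.range (affineChart h) :=
        mem_range_affineChart (by simp) h fun hpv => hv ((mk_mem_projRoots hF _).1 (hpv ▸ hp))
      exact ⟨t, by simpa [lineRestriction_ne_zero hF hv w] using (hmem t).1 hp, rfl⟩
    · rintro ⟨t, ht, rfl⟩
      exact (hmem t).2 (Polynomial.mem_roots'.1 (Multiset.mem_toFinset.1 ht)).2
  rw [himage, Set.ncard_image_of_injective _ (affineChart_injective h), Set.ncard_coe_finset]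

theorem ncard_projRoots_lt_of_singular (hF : F.IsHomogeneous n) (hn : n ≠ 0) {p : Fin 2 → ℝ}
    (hp : p ≠ 0) (hsing : ∀ u, eval p (polar u F) = 0) : (projRoots F).ncard < n := by
  rcases eq_or_ne F 0 with rfl | hF₀
  · rw [ncard_projRoots_zero]
    exact Nat.pos_of_ne_zero hn
  obtain ⟨v, hv⟩ := exists_eval_ne_zero hF₀
  have hFp : eval p F = 0 := by simpa [hn, hsing p] using (eval_polar_self hF p).symm
  have hvp : LinearIndependent ℝ ![v, p] := by
    rw [LinearIndependent.pair_symm_iff, LinearIndependent.pair_iff' hp]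
    rintro a rfl
    exact hv (by rw [eval_smul_of_isHomogeneous hF, hFp, mul_zero])
  rw [ncard_projRoots_eq_card_roots hF hvp hv]
  refine (card_toFinset_roots_lt_natDegree (t := 0)
    (lineRestriction_ne_zero hF hv p) ?_ ?_).trans_le (natDegree_lineRestriction_le hF v p)
  · simpa [Polynomial.IsRoot, eval_lineRestriction] using hFp
  · simpa [Polynomial.IsRoot, derivative_lineRestriction, eval_lineRestriction] using hsing v

end ProjRoots

section PolarsWithRealRoots

variable {d : ℕ} {f : MvPolynomial (Fin 2) ℝ} {v : Fin 2 → ℝ}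

theorem eval_mul_eval_polar_polar_ne (hd : 2 ≤ d) (hf : f.IsHomogeneous d)
    (hpolar : ∀ u ≠ 0, (projRoots (polar u f)).ncard = d - 1) {p : Fin 2 → ℝ}
    (hvp : LinearIndependent ℝ ![v, p]) :
    d * (eval p f * eval p (polar v (polar v f))) ≠ (d - 1) * eval p (polar v f) ^ 2 := by
  intro h
  -- By Euler's identity this is the Hessian of `f` at `p` in the basis `(v, p)`, up to a factor
  -- `d - 1` in the second row.
  have hdet : !![eval p (polar v (polar v f)), (d - 1) * eval p (polar v f);
      eval p (polar v f), d * eval p f].det = 0 := by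
    rw [Matrix.det_fin_two_of]
    linear_combination h
  obtain ⟨u, hu, hker⟩ := Matrix.exists_mulVec_eq_zero_iff.2 hdet
  set q := u 0 • v + u 1 • p with hq
  have hq₀ : q ≠ 0 := fun h₀ => hu <| by
    obtain ⟨h0, h1⟩ := LinearIndependent.pair_iff.1 hvp _ _ h₀
    exact funext (Fin.forall_fin_two.2 ⟨h0, h1⟩)
  have hcast : ((d - 1 : ℕ) : ℝ) = d - 1 := Nat.cast_pred (by lia)
  have hp : eval p (polar p (polar q f)) = 0 := by
    have hker₁ : eval p (polar v f) * u 0 + d * eval p f * u 1 = 0 := by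
      simpa [Matrix.mulVec, dotProduct] using congrFun hker 1
    rw [eval_polar_self (isHomogeneous_polar hf q), hq, polar_smul_add_smul, map_add, smul_eval,
      smul_eval, eval_polar_self hf]
    linear_combination ((d - 1 : ℕ) : ℝ) * hker₁
  have hv : eval p (polar v (polar q f)) = 0 := by
    have hker₀ : eval p (polar v (polar v f)) * u 0 + (d - 1) * eval p (polar v f) * u 1 = 0 := by
      simpa [Matrix.mulVec, dotProduct] using congrFun hker 0
    rw [polar_comm, hq, polar_smul_add_smul, map_add, smul_eval, smul_eval,
      eval_polar_self (isHomogeneous_polar hf v), hcast]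
    linear_combination hker₀
  have hsing (x : Fin 2 → ℝ) : eval p (polar x (polar q f)) = 0 := by
    obtain ⟨α, β, rfl⟩ := exists_smul_add_smul_eq (by simp) hvp x
    rw [polar_smul_add_smul, map_add, smul_eval, smul_eval, hv, hp, mul_zero, mul_zero, add_zero]
  exact (ncard_projRoots_lt_of_singular (isHomogeneous_polar hf q) (by lia) (hvp.ne_zero 1)
    hsing).ne (hpolar q hq₀)

theorem laguerre_lineRestriction (hd : 3 ≤ d) (hf : f.IsHomogeneous d)
    (hpolar : ∀ u ≠ 0, (projRoots (polar u f)).ncard = d - 1) {w : Fin 2 → ℝ}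
    (hvw : LinearIndependent ℝ ![v, w])
    (hcrit : (lineRestriction v w f).derivative.roots.toFinset.card = d - 1) (t : ℝ) :
    (lineRestriction v w f).eval t * (lineRestriction v w f).derivative.derivative.eval t <
      (lineRestriction v w f).derivative.eval t ^ 2 := by
  refine laguerre_of_ne (d := d) (by exact_mod_cast (by lia : 1 ≤ d)) (fun s => ?_) ?_ t
  · have hvp : LinearIndependent ℝ ![v, s • v + w] :=
      (LinearIndependent.pair_add_smul_right_iff s).2 hvw
    simpa only [derivative_lineRestriction, eval_lineRestriction] using
      eval_mul_eval_polar_polar_ne (by lia) hf hpolar hvp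
  · have hrolle := (lineRestriction v w f).derivative.card_roots_toFinset_le_derivative
    obtain ⟨s, hs⟩ := Finset.card_pos.1
      (by lia : 0 < (lineRestriction v w f).derivative.derivative.roots.toFinset.card)
    exact ⟨s, (Polynomial.mem_roots'.1 (Multiset.mem_toFinset.1 hs)).2⟩

theorem ncard_projRoots_of_ncard_projRoots_polar (hd : 3 ≤ d) (hf : f.IsHomogeneous d)
    (hpolar : ∀ u ≠ 0, (projRoots (polar u f)).ncard = d - 1) : (projRoots f).ncard = d := by
  have hf₀ : f ≠ 0 := by
    rintro rfl
    have := hpolar 1 one_ne_zero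
    rw [map_zero, ncard_projRoots_zero] at this
    lia
  obtain ⟨v, hv⟩ := exists_eval_ne_zero hf₀
  have hv' : eval v (polar v f) ≠ 0 := by
    rw [eval_polar_self hf]
    exact mul_ne_zero (by positivity) hv
  have hv₀ : v ≠ 0 := by
    rintro rfl
    simp [polar_eq_sum] at hv'
  obtain ⟨w, hvw⟩ := exists_linearIndependent_pair_of_one_lt_finrank (R := ℝ) (by simp) hv₀
  set g := lineRestriction v w f
  have hcrit : g.derivative.roots.toFinset.card = d - 1 := by
    rw [derivative_lineRestriction, ← hpolar v hv₀,
      ncard_projRoots_eq_card_roots (isHomogeneous_polar hf v) hvw hv']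
  have hdeg : 0 < g.degree := by
    by_contra! hle
    rw [Polynomial.eq_C_of_degree_le_zero hle, Polynomial.derivative_C, Polynomial.roots_zero,
      Multiset.toFinset_zero, Finset.card_empty] at hcrit
    lia
  have hlower : d - 1 < g.roots.toFinset.card :=
    hcrit ▸ card_roots_derivative_lt_card_roots_of_laguerre hdeg
      (laguerre_lineRestriction hd hf hpolar hvw hcrit)
  have hupper : g.roots.toFinset.card ≤ d :=
    (Multiset.toFinset_card_le _).trans (g.card_roots'.trans (natDegree_lineRestriction_le hf v w))
  rw [ncard_projRoots_eq_card_roots hf hvw hv]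
  lia

end PolarsWithRealRoots

theorem stmt9_general (d : ℕ) (hd3 : 3 ≤ d) (f : MvPolynomial (Fin 2) ℝ)
    (hf : f.IsHomogeneous d)
    (hpolar : ∀ a b : ℝ, (a, b) ≠ (0, 0) →
      (projRoots (C a * pderiv 0 f + C b * pderiv 1 f)).ncard = d - 1) :
    (projRoots f).ncard = d := by
  refine ncard_projRoots_of_ncard_projRoots_polar hd3 hf fun u hu => ?_
  rw [polar_eq_sum, Fin.sum_univ_two]
  refine hpolar (u 0) (u 1) fun h => hu ?_
  exact funext (Fin.forall_fin_two.2 (Prod.mk.inj h))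

/-- let `f` be a real binary form of degree `d`, `3 ≤ d ≤ 5`, with
distinct complex roots. If for every `(a,b) ≠ (0,0)` the form `a·∂f/∂x + b·∂f/∂y`
has `d - 1` distinct real roots, then `f` has `d` distinct real roots. -/
theorem stmt9 (d : ℕ) (hd3 : 3 ≤ d) (hd5 : d ≤ 5) (f : MvPolynomial (Fin 2) ℝ)
    (hf : f.IsHomogeneous d) (hsf : SquarefreeC f)
    (hpolar : ∀ a b : ℝ, (a, b) ≠ (0, 0) →
      (projRoots (C a * pderiv 0 f + C b * pderiv 1 f)).ncard = d - 1) :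
    (projRoots f).ncard = d :=
  stmt9_general d hd3 f hf hpolar
end
end

section
/- Let f be a real binary form of degree d with 3 ≤ d ≤ 5 and with distinct roots (squarefree over ℂ). If the real rank of f equals d, then f has d distinct real roots. -/
/-
A form `f` of degree `d ≥ 3` with a pair of non-real roots `z, conj z` is a combination of `d - 1`
powers of real linear forms, so real rank `d` forces all roots to be real. To find these powers,
move `z` and `conj z` to `∞` and `0`: the real projective line becomes the unit circle, and the
apolarity functional `L` of `f`, on polynomials of degree at most `d`, satisfies `L (X ^ d) = 0`
and commutes with the conjugate reciprocal `q ↦ q*` up to conjugation. What is wanted is a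
quadrature formula for `L` with `d - 1` nodes on the circle, so a polynomial `g` of degree `d - 1`
with simple roots, all on the circle, and `L g = L (X g) = 0`. If all roots of `p` lie in the open
unit disc, then `g = p + p*` has simple roots on the circle: `|p| < |p*|` inside the disc, and
`Re (w p'(w) / p(w)) > deg p / 2` on its boundary. For such `g` both conditions on `L` reduce to
`L p + conj (L (X p)) = 0`, which has a solution of the form `p = ω X ^ (d - 3) (X - r) (X - s)`.
-/

open MvPolynomial

noncomputable section

open scoped Polynomial ComplexConjugate

section ConjReflect

/-- The conjugate reciprocal `p*` of a complex polynomial, `p*(w) = wⁿ · conj (p (1 / conj w))`,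
taken with respect to a formal degree `n`; it is meaningful only when `p.natDegree ≤ n`. -/
def conjReflect (n : ℕ) (p : ℂ[X]) : ℂ[X] := (p.map (starRingEnd ℂ)).reflect n

variable {m n k : ℕ} {p q : ℂ[X]} {w : ℂ}

lemma coeff_conjReflect (hk : k ≤ n) (p : ℂ[X]) :
    (conjReflect n p).coeff k = conj (p.coeff (n - k)) := by
  rw [conjReflect, Polynomial.coeff_reflect, Polynomial.revAt_le hk, Polynomial.coeff_map]

lemma natDegree_conjReflect_le (hp : p.natDegree ≤ n) : (conjReflect n p).natDegree ≤ n :=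
  Polynomial.natDegree_reflect_le.trans (max_le le_rfl (Polynomial.natDegree_map_le.trans hp))

lemma conjReflect_conjReflect (n : ℕ) (p : ℂ[X]) : conjReflect n (conjReflect n p) = p := by
  ext k
  simp only [conjReflect, Polynomial.reflect_map, Polynomial.coeff_reflect, Polynomial.coeff_map,
    Complex.conj_conj, Polynomial.revAt_invol]

lemma conjReflect_add (n : ℕ) (p q : ℂ[X]) :
    conjReflect n (p + q) = conjReflect n p + conjReflect n q := by
  rw [conjReflect, Polynomial.map_add, Polynomial.reflect_add]
  rfl

lemma conjReflect_mul (hp : p.natDegree ≤ m) (hq : q.natDegree ≤ n) :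
    conjReflect (m + n) (p * q) = conjReflect m p * conjReflect n q := by
  rw [conjReflect, Polynomial.map_mul]
  exact Polynomial.reflect_mul _ _ (Polynomial.natDegree_map_le.trans hp)
    (Polynomial.natDegree_map_le.trans hq)

lemma conjReflect_C (a : ℂ) : conjReflect 0 (Polynomial.C a) = Polynomial.C (conj a) := by
  simp [conjReflect]

lemma conjReflect_one_X_sub_C (r : ℂ) :
    conjReflect 1 (Polynomial.X - Polynomial.C r) =
      1 - Polynomial.C (conj r) * Polynomial.X := by
  simp [conjReflect, Polynomial.reflect_sub]

lemma conjReflect_succ_X_mul (hp : p.natDegree ≤ n) :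
    conjReflect (n + 1) (Polynomial.X * p) = conjReflect n p := by
  have hX : conjReflect 1 Polynomial.X = 1 := by simpa using conjReflect_one_X_sub_C 0
  rw [add_comm, conjReflect_mul Polynomial.natDegree_X_le hp, hX, one_mul]

lemma conjReflect_succ (hp : p.natDegree ≤ n) :
    conjReflect (n + 1) p = Polynomial.X * conjReflect n p := by
  rw [← conjReflect_conjReflect (n + 1) (Polynomial.X * _),
    conjReflect_succ_X_mul (natDegree_conjReflect_le hp), conjReflect_conjReflect]

lemma eval_conjReflect (hp : p.natDegree ≤ n) (hw : w ≠ 0) :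
    (conjReflect n p).eval w = w ^ n * conj (p.eval (conj w)⁻¹) := by
  let : Invertible w⁻¹ := invertibleOfNonzero (inv_ne_zero hw)
  have hreflect := Polynomial.eval₂_reflect_mul_pow (RingHom.id ℂ) w⁻¹ n (p.map (starRingEnd ℂ))
    (Polynomial.natDegree_map_le.trans hp)
  have hconj : (p.map (starRingEnd ℂ)).eval w⁻¹ = conj (p.eval (conj w)⁻¹) := by
    rw [← Polynomial.eval_map_apply, map_inv₀, Complex.conj_conj]
  rw [invOf_eq_inv, inv_inv, ← Polynomial.eval, ← Polynomial.eval, hconj] at hreflect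
  rw [conjReflect, ← hreflect, mul_left_comm, ← mul_pow, mul_inv_cancel₀ hw, one_pow, mul_one]

lemma eval_conjReflect_of_norm_eq_one (hp : p.natDegree ≤ n) (hw : ‖w‖ = 1) :
    (conjReflect n p).eval w = w ^ n * conj (p.eval w) := by
  have hw0 : w ≠ 0 := norm_ne_zero_iff.mp (hw ▸ one_ne_zero)
  have hinv : (conj w)⁻¹ = w := by rw [← Complex.inv_eq_conj hw, inv_inv]
  rw [eval_conjReflect hp hw0, hinv]

lemma coeff_X_mul_derivative {R : Type*} [CommSemiring R] (p : R[X]) (k : ℕ) :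
    (Polynomial.X * p.derivative).coeff k = k * p.coeff k := by
  cases k with
  | zero => rw [Polynomial.coeff_X_mul_zero, Nat.cast_zero, zero_mul]
  | succ k =>
    rw [Polynomial.coeff_X_mul, Polynomial.coeff_derivative, Nat.cast_add_one, mul_comm]

lemma natDegree_X_mul_derivative_le {R : Type*} [CommSemiring R] (p : R[X]) :
    (Polynomial.X * p.derivative).natDegree ≤ p.natDegree := by
  refine Polynomial.natDegree_le_iff_coeff_eq_zero.mpr fun j hj ↦ ?_
  rw [coeff_X_mul_derivative, Polynomial.coeff_eq_zero_of_natDegree_lt hj, mul_zero]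

lemma X_mul_derivative_conjReflect (hp : p.natDegree ≤ n) :
    Polynomial.X * (conjReflect n p).derivative =
      (n : ℂ[X]) * conjReflect n p - conjReflect n (Polynomial.X * p.derivative) := by
  ext k
  rw [coeff_X_mul_derivative, Polynomial.coeff_sub, Polynomial.coeff_natCast_mul]
  rcases le_or_gt k n with hk | hk
  · rw [coeff_conjReflect hk, coeff_conjReflect hk, coeff_X_mul_derivative, map_mul, map_natCast,
      Nat.cast_sub hk]
    ring
  · have hX := (natDegree_X_mul_derivative_le p).trans hp
    rw [Polynomial.coeff_eq_zero_of_natDegree_lt ((natDegree_conjReflect_le hp).trans_lt hk),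
      Polynomial.coeff_eq_zero_of_natDegree_lt ((natDegree_conjReflect_le hX).trans_lt hk)]
    simp

lemma mul_eval_derivative_conjReflect_of_norm_eq_one (hp : p.natDegree ≤ n) (hw : ‖w‖ = 1) :
    w * (conjReflect n p).derivative.eval w =
      w ^ n * (n * conj (p.eval w) - conj (w * p.derivative.eval w)) := by
  have h := congrArg (Polynomial.eval w) (X_mul_derivative_conjReflect hp)
  rw [Polynomial.eval_mul, Polynomial.eval_X, Polynomial.eval_sub, Polynomial.eval_mul,
    Polynomial.eval_natCast, eval_conjReflect_of_norm_eq_one hp hw,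
    eval_conjReflect_of_norm_eq_one ((natDegree_X_mul_derivative_le p).trans hp) hw,
    Polynomial.eval_mul, Polynomial.eval_X] at h
  rw [h]
  ring

end ConjReflect

section SchurStable

/-- A complex polynomial is *Schur stable* if all its roots lie in the open unit disc. -/
def IsSchurStable (p : ℂ[X]) : Prop := ∀ r, p.IsRoot r → ‖r‖ < 1

variable {p : ℂ[X]} {w r : ℂ}

lemma norm_sub_lt_norm_one_sub_conj_mul (hr : ‖r‖ < 1) (hw : ‖w‖ < 1) :
    ‖w - r‖ < ‖1 - conj r * w‖ := by
  have hidentity : ‖1 - conj r * w‖ ^ 2 - ‖w - r‖ ^ 2 = (1 - ‖r‖ ^ 2) * (1 - ‖w‖ ^ 2) := by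
    simp only [Complex.sq_norm, Complex.normSq_apply, Complex.sub_re, Complex.sub_im,
      Complex.mul_re, Complex.mul_im, Complex.conj_re, Complex.conj_im, Complex.one_re,
      Complex.one_im]
    ring
  have hpos : 0 < (1 - ‖r‖ ^ 2) * (1 - ‖w‖ ^ 2) :=
    mul_pos (sub_pos.mpr (pow_lt_one₀ (norm_nonneg r) hr two_ne_zero))
      (sub_pos.mpr (pow_lt_one₀ (norm_nonneg w) hw two_ne_zero))
  exact lt_of_pow_lt_pow_left₀ 2 (norm_nonneg _) (by linarith)

lemma one_half_lt_re_mul_one_div_sub (hr : ‖r‖ < 1) (hw : ‖w‖ = 1) :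
    1 / 2 < (w * (1 / (w - r))).re := by
  have hne : w - r ≠ 0 := sub_ne_zero.mpr (by rintro rfl; exact hr.ne hw)
  have hre : (w * (1 / (w - r))).re = 1 / 2 + (1 - ‖r‖ ^ 2) / (2 * ‖w - r‖ ^ 2) := by
    have hnormSq : Complex.normSq (w - r) ≠ 0 := Complex.normSq_eq_zero.not.mpr hne
    have hw2 : w.re * w.re + w.im * w.im = 1 := by
      rw [← Complex.normSq_apply, ← Complex.sq_norm, hw, one_pow]
    rw [mul_one_div, Complex.div_re, Complex.sq_norm, Complex.sq_norm]
    field_simp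
    simp only [Complex.normSq_apply, Complex.sub_re, Complex.sub_im]
    linear_combination hw2
  have hpos : 0 < (1 - ‖r‖ ^ 2) / (2 * ‖w - r‖ ^ 2) :=
    div_pos (sub_pos.mpr (pow_lt_one₀ (norm_nonneg r) hr two_ne_zero))
      (mul_pos two_pos (pow_pos (norm_pos_iff.mpr hne) 2))
  linarith

lemma roots_ne_zero_of_natDegree_ne_zero (hdeg : p.natDegree ≠ 0) : p.roots ≠ 0 := fun hroots ↦
  hdeg (by rw [← IsAlgClosed.card_roots_eq_natDegree, hroots, Multiset.card_zero])

lemma eval_conjReflect_natDegree (p : ℂ[X]) (w : ℂ) :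
    (conjReflect p.natDegree p).eval w =
      conj p.leadingCoeff * (p.roots.map fun r ↦ 1 - conj r * w).prod := by
  have hprod (s : Multiset ℂ) :
      conjReflect s.card (s.map fun r ↦ Polynomial.X - Polynomial.C r).prod =
        (s.map fun r ↦ 1 - Polynomial.C (conj r) * Polynomial.X).prod := by
    induction s using Multiset.induction with
    | empty => simp [conjReflect]
    | cons r s ih =>
      rw [Multiset.card_cons, Multiset.map_cons, Multiset.prod_cons, add_comm,
        conjReflect_mul (Polynomial.natDegree_X_sub_C_le r)
          (Polynomial.natDegree_multiset_prod_X_sub_C_eq_card s).le,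
        conjReflect_one_X_sub_C, ih, Multiset.map_cons, Multiset.prod_cons]
  have hfactor : conjReflect p.natDegree p =
      conjReflect (0 + p.roots.card)
        (Polynomial.C p.leadingCoeff *
          (p.roots.map fun r ↦ Polynomial.X - Polynomial.C r).prod) := by
    rw [← (IsAlgClosed.splits p).eq_prod_roots, zero_add, IsAlgClosed.card_roots_eq_natDegree]
  rw [hfactor, conjReflect_mul (Polynomial.natDegree_C _).le
      (Polynomial.natDegree_multiset_prod_X_sub_C_eq_card _).le, conjReflect_C, hprod,
    Polynomial.eval_mul, Polynomial.eval_C, Polynomial.eval_multiset_prod, Multiset.map_map]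
  simp only [Function.comp_def, Polynomial.eval_sub, Polynomial.eval_one, Polynomial.eval_mul,
    Polynomial.eval_C, Polynomial.eval_X]

namespace IsSchurStable

lemma norm_eval_lt_norm_eval_conjReflect (hp : IsSchurStable p) (hdeg : p.natDegree ≠ 0)
    (hw : ‖w‖ < 1) : ‖p.eval w‖ < ‖(conjReflect p.natDegree p).eval w‖ := by
  have hp0 : p ≠ 0 := Polynomial.ne_zero_of_natDegree_gt (Nat.pos_of_ne_zero hdeg)
  have hlt (r) (hr : r ∈ p.roots) : ‖w - r‖ < ‖1 - conj r * w‖ :=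
    norm_sub_lt_norm_one_sub_conj_mul (hp r (Polynomial.isRoot_of_mem_roots hr)) hw
  have hnorm (s : Multiset ℂ) (φ : ℂ → ℂ) : ‖(s.map φ).prod‖ = (s.map (‖φ ·‖)).prod :=
    (Multiset.prod_hom' s (normHom (α := ℂ)) φ).symm
  rw [eval_conjReflect_natDegree, (IsAlgClosed.splits p).eval_eq_prod_roots, norm_mul, norm_mul,
    Complex.norm_conj, hnorm, hnorm]
  refine mul_lt_mul_of_pos_left ?_ (norm_pos_iff.mpr (Polynomial.leadingCoeff_ne_zero.mpr hp0))
  by_cases hroot : w ∈ p.roots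
  · rw [Multiset.prod_eq_zero (Multiset.mem_map.mpr ⟨w, hroot, by rw [sub_self, norm_zero]⟩)]
    refine Multiset.prod_pos fun x hx ↦ ?_
    obtain ⟨r, hr, rfl⟩ := Multiset.mem_map.mp hx
    exact (norm_nonneg _).trans_lt (hlt r hr)
  · refine Multiset.prod_map_lt_prod_map (roots_ne_zero_of_natDegree_ne_zero hdeg) _ _
      (fun r hr ↦ norm_pos_iff.mpr (sub_ne_zero.mpr ?_)) hlt
    rintro rfl
    exact hroot hr

lemma natDegree_div_two_lt_re (hp : IsSchurStable p) (hdeg : p.natDegree ≠ 0) (hw : ‖w‖ = 1) :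
    p.natDegree / 2 < (w * (p.derivative.eval w / p.eval w)).re := by
  have hpw : p.eval w ≠ 0 := fun hroot ↦ (hp w hroot).ne hw
  calc (p.natDegree / 2 : ℝ) = (p.roots.map fun _ ↦ (1 / 2 : ℝ)).sum := by
        rw [Multiset.map_const', Multiset.sum_replicate, IsAlgClosed.card_roots_eq_natDegree,
          nsmul_eq_mul, mul_one_div]
    _ < (p.roots.map fun r ↦ (w * (1 / (w - r))).re).sum :=
        Multiset.sum_lt_sum_of_nonempty (roots_ne_zero_of_natDegree_ne_zero hdeg) fun r hr ↦
          one_half_lt_re_mul_one_div_sub (hp r (Polynomial.isRoot_of_mem_roots hr)) hw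
    _ = (w * (p.derivative.eval w / p.eval w)).re := by
        rw [(IsAlgClosed.splits p).eval_derivative_div_eval_of_ne_zero hpw,
          ← Multiset.sum_map_mul_left]
        exact Multiset.sum_hom' p.roots Complex.reLm fun r ↦ w * (1 / (w - r))

lemma natDegree_add_conjReflect (hp : IsSchurStable p) (hdeg : p.natDegree ≠ 0) :
    (p + conjReflect p.natDegree p).natDegree = p.natDegree := by
  set n := p.natDegree with hn
  have hlt : ‖p.coeff 0‖ < ‖p.leadingCoeff‖ := by
    have h0 := hp.norm_eval_lt_norm_eval_conjReflect hdeg (w := 0) (by simp)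
    rwa [← Polynomial.coeff_zero_eq_eval_zero, ← Polynomial.coeff_zero_eq_eval_zero,
      coeff_conjReflect (Nat.zero_le _), Nat.sub_zero, Complex.norm_conj] at h0
  refine Polynomial.natDegree_eq_of_le_of_coeff_ne_zero
    (Polynomial.natDegree_add_le_of_degree_le le_rfl (natDegree_conjReflect_le le_rfl)) fun h ↦ ?_
  rw [Polynomial.coeff_add, coeff_conjReflect le_rfl, Nat.sub_self, add_eq_zero_iff_eq_neg] at h
  refine hlt.ne' ?_
  rw [Polynomial.leadingCoeff, ← hn, h, norm_neg, Complex.norm_conj]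

lemma norm_eq_one_of_isRoot_add_conjReflect (hp : IsSchurStable p) (hdeg : p.natDegree ≠ 0)
    (hroot : (p + conjReflect p.natDegree p).IsRoot w) : ‖w‖ = 1 := by
  set n := p.natDegree
  have hinside {v : ℂ} (hv : (p + conjReflect n p).IsRoot v) : 1 ≤ ‖v‖ := by
    by_contra! hlt
    rw [Polynomial.IsRoot, Polynomial.eval_add, add_eq_zero_iff_eq_neg] at hv
    have hnorm := hp.norm_eval_lt_norm_eval_conjReflect hdeg hlt
    rw [hv, norm_neg] at hnorm
    exact hnorm.false
  have hw0 : w ≠ 0 := norm_pos_iff.mp (one_pos.trans_le (hinside hroot))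
  have hreflected : (p + conjReflect n p).IsRoot (conj w)⁻¹ := by
    have hself : conjReflect n (p + conjReflect n p) = p + conjReflect n p := by
      rw [conjReflect_add, conjReflect_conjReflect, add_comm]
    have heval := eval_conjReflect (natDegree_add_conjReflect hp hdeg).le hw0
    rw [hself, hroot.eq_zero, eq_comm, mul_eq_zero, map_eq_zero] at heval
    exact heval.resolve_left (pow_ne_zero n hw0)
  have houtside := hinside hreflected
  rw [norm_inv, Complex.norm_conj] at houtside
  exact le_antisymm ((one_le_inv₀ (norm_pos_iff.mpr hw0)).mp houtside) (hinside hroot)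

lemma eval_derivative_add_conjReflect_ne_zero (hp : IsSchurStable p) (hdeg : p.natDegree ≠ 0)
    (hroot : (p + conjReflect p.natDegree p).IsRoot w) :
    (p + conjReflect p.natDegree p).derivative.eval w ≠ 0 := by
  intro hderiv
  have hw := hp.norm_eq_one_of_isRoot_add_conjReflect hdeg hroot
  set n := p.natDegree
  set u := w * (p.derivative.eval w / p.eval w) with hu
  have hpw : p.eval w ≠ 0 := fun hroot ↦ (hp w hroot).ne hw
  have hvalue : w ^ n * conj (p.eval w) = -p.eval w := by
    rw [← eval_conjReflect_of_norm_eq_one le_rfl hw, eq_neg_iff_add_eq_zero, add_comm,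
      ← Polynomial.eval_add]
    exact hroot
  have hslope : w * p.derivative.eval w = p.eval w * u := by rw [hu]; field_simp
  have hslope_reflect : w * (conjReflect n p).derivative.eval w = p.eval w * (conj u - n) := by
    rw [mul_eval_derivative_conjReflect_of_norm_eq_one le_rfl hw, hslope, map_mul]
    linear_combination (n - conj u) * hvalue
  have hsum : p.eval w * (u + conj u - n) = w * 0 := by
    rw [← hderiv, Polynomial.derivative_add, Polynomial.eval_add, mul_add, hslope, hslope_reflect]
    ring
  rw [mul_zero, mul_eq_zero, or_iff_right hpw, Complex.add_conj, sub_eq_zero] at hsum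
  have hre : 2 * u.re = n := by exact_mod_cast hsum
  have hlt := hp.natDegree_div_two_lt_re hdeg hw
  linarith

lemma nodup_roots_add_conjReflect (hp : IsSchurStable p) (hdeg : p.natDegree ≠ 0) :
    (p + conjReflect p.natDegree p).roots.Nodup := by
  refine Polynomial.nodup_roots
    ((Polynomial.isCoprime_iff_aeval_ne_zero_of_isAlgClosed ℂ ℂ _ _).mpr fun w ↦ ?_)
  simp only [Polynomial.coe_aeval_eq_eval]
  exact or_iff_not_imp_left.mpr fun hroot ↦
    hp.eval_derivative_add_conjReflect_ne_zero hdeg (not_not.mp hroot)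

end IsSchurStable

end SchurStable

section Quadrature

variable {K : Type*} [Field K] {g q : K[X]}

lemma natDegree_mul_div_le (hg : g ≠ 0) : (g * (q / g)).natDegree ≤ q.natDegree := by
  rcases lt_or_ge q.degree g.degree with hlt | hle
  · rw [(Polynomial.div_eq_zero_iff hg).mpr hlt, mul_zero, Polynomial.natDegree_zero]
    exact Nat.zero_le _
  · refine Polynomial.natDegree_le_natDegree ?_
    rw [Polynomial.degree_mul, Polynomial.degree_add_div hg hle]

lemma exists_eq_sum_eval_roots [DecidableEq K] (L : K[X] →ₗ[K] K) {N : ℕ} (hg : g.Splits)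
    (hg0 : g ≠ 0) (hnodup : g.roots.Nodup) (hL : ∀ h, (g * h).natDegree ≤ N → L (g * h) = 0) :
    ∃ c : K → K, ∀ q : K[X], q.natDegree ≤ N →
      L q = ∑ t ∈ g.roots.toFinset, c t * q.eval t := by
  set s := g.roots.toFinset with hs
  have hcard : s.card = g.natDegree := by
    rw [hs, Multiset.toFinset_card_of_nodup hnodup, hg.natDegree_eq_card_roots]
  have hinj : Set.InjOn (id : K → K) s := Set.injOn_id _
  refine ⟨fun t ↦ L (Lagrange.basis s id t), fun q hq ↦ ?_⟩
  have heval {t : K} (ht : t ∈ s) : (q % g).eval t = q.eval t := by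
    have hroot : g.eval t = 0 := Polynomial.isRoot_of_mem_roots (Multiset.mem_toFinset.mp ht)
    conv_rhs => rw [← EuclideanDomain.mod_add_div q g]
    rw [Polynomial.eval_add, Polynomial.eval_mul, hroot, zero_mul, add_zero]
  have hmod : q % g = Lagrange.interpolate s id fun t ↦ q.eval t := by
    refine Lagrange.eq_interpolate_of_eval_eq _ hinj ?_ fun t ht ↦ heval ht
    rw [hcard, ← Polynomial.degree_eq_natDegree hg0]
    exact EuclideanDomain.mod_lt q hg0
  calc L q = L (q % g) := by
        conv_lhs => rw [← EuclideanDomain.mod_add_div q g, map_add,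
          hL _ ((natDegree_mul_div_le hg0).trans hq), add_zero]
    _ = ∑ t ∈ s, L (Lagrange.basis s id t) * q.eval t := by
        rw [hmod, Lagrange.interpolate_apply, map_sum]
        exact Finset.sum_congr rfl fun t _ ↦ by
          rw [← Polynomial.smul_eq_C_mul, map_smul, smul_eq_mul, mul_comm]

end Quadrature

section Apolar

variable {K : Type*} [Field K]

/-- The apolarity functional of the degree-`d` form `P(x, y) = ∑ₖ Pₖ xᵏ yᵈ⁻ᵏ`, given by its
dehomogenization `P`: the linear form on polynomials of degree at most `d` that takes
`(aX + b)ᵈ` to `P(a, b)`. -/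
def apolar (d : ℕ) (P : K[X]) : K[X] →ₗ[K] K :=
  ∑ k ∈ Finset.range (d + 1), (P.coeff k / d.choose k) • Polynomial.lcoeff K k

lemma apolar_apply (d : ℕ) (P q : K[X]) :
    apolar d P q = ∑ k ∈ Finset.range (d + 1), P.coeff k / d.choose k * q.coeff k := by
  simp [apolar]

lemma apolar_X_pow (d : ℕ) (P : K[X]) : apolar d P (Polynomial.X ^ d) = P.coeff d := by
  simp [apolar_apply, Polynomial.coeff_X_pow]

lemma coeff_C_mul_X_add_C_pow (d k : ℕ) (a b : K) :
    ((Polynomial.C a * Polynomial.X + Polynomial.C b) ^ d).coeff k =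
      d.choose k * (a ^ k * b ^ (d - k)) := by
  have hcomp : (Polynomial.C a * Polynomial.X + Polynomial.C b) ^ d =
      ((Polynomial.X + Polynomial.C b) ^ d).comp (Polynomial.C a * Polynomial.X) := by
    rw [Polynomial.pow_comp, Polynomial.add_comp, Polynomial.X_comp, Polynomial.C_comp]
  rw [hcomp, Polynomial.comp_C_mul_X_coeff, Polynomial.coeff_X_add_C_pow]
  ring

lemma apolar_linear_pow [CharZero K] (d : ℕ) (P : K[X]) (a b : K) :
    apolar d P ((Polynomial.C a * Polynomial.X + Polynomial.C b) ^ d) =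
      eval ![a, b] (P.homogenize d) := by
  rw [apolar_apply, Polynomial.homogenize, MvPolynomial.eval_sum,
    Finset.Nat.sum_antidiagonal_eq_sum_range_succ_mk]
  refine Finset.sum_congr rfl fun k hk ↦ ?_
  have hkd : k ≤ d := Nat.lt_succ_iff.mp (Finset.mem_range.mp hk)
  have hchoose : (d.choose k : K) ≠ 0 := Nat.cast_ne_zero.mpr (Nat.choose_pos hkd).ne'
  rw [coeff_C_mul_X_add_C_pow, ← mul_assoc, div_mul_cancel₀ _ hchoose]
  simp [MvPolynomial.eval_monomial]

lemma apolar_conjReflect (d : ℕ) (P q : ℂ[X]) :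
    apolar d (conjReflect d P) (conjReflect d q) = conj (apolar d P q) := by
  rw [apolar_apply, apolar_apply, map_sum, ← Finset.sum_range_reflect]
  refine Finset.sum_congr rfl fun k hk ↦ ?_
  have hkd : k ≤ d := Nat.lt_succ_iff.mp (Finset.mem_range.mp hk)
  rw [Nat.add_sub_cancel, coeff_conjReflect (Nat.sub_le d k), coeff_conjReflect (Nat.sub_le d k),
    Nat.sub_sub_self hkd, Nat.choose_symm hkd, map_mul, map_div₀, map_natCast]

end Apolar

section KernelElement

lemma exists_norm_eq_one_sq_mul_eq {u v : ℂ} (h : ‖u‖ = ‖v‖) :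
    ∃ ω : ℂ, ‖ω‖ = 1 ∧ ω ^ 2 * u = v := by
  rcases eq_or_ne u 0 with rfl | hu
  · rw [norm_zero, eq_comm, norm_eq_zero] at h
    exact ⟨1, norm_one, by rw [h, mul_zero]⟩
  · obtain ⟨ω, hω⟩ := IsAlgClosed.exists_pow_nat_eq (v / u) two_pos
    refine ⟨ω, ?_, by rw [hω, div_mul_cancel₀ _ hu]⟩
    rw [← pow_eq_one_iff_of_nonneg (norm_nonneg ω) two_ne_zero, ← norm_pow, hω, norm_div, h,
      div_self (h ▸ norm_ne_zero_iff.mpr hu)]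

lemma exists_norm_lt_one_norm_eq_of_ne_zero (a : ℂ) {b : ℂ} (hb : b ≠ 0) :
    ∃ r : ℂ, ‖r‖ < 1 ∧ ‖a - r * b‖ = ‖r * a‖ := by
  have hb' : 0 < ‖b‖ := norm_pos_iff.mpr hb
  have hsum : 0 < ‖a‖ + ‖b‖ := add_pos_of_nonneg_of_pos (norm_nonneg a) hb'
  have hsumC : ((‖a‖ + ‖b‖ : ℝ) : ℂ) ≠ 0 := Complex.ofReal_ne_zero.mpr hsum.ne'
  have hnorm_sum : ‖((‖a‖ + ‖b‖ : ℝ) : ℂ)‖ = ‖a‖ + ‖b‖ := by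
    rw [Complex.norm_real, Real.norm_of_nonneg hsum.le]
  refine ⟨a * ‖b‖ / (b * (‖a‖ + ‖b‖ : ℝ)), ?_, ?_⟩
  · rw [norm_div, norm_mul, norm_mul, Complex.norm_real, norm_norm, hnorm_sum,
      div_lt_one (mul_pos hb' hsum)]
    nlinarith
  · have hdiff : a - a * ‖b‖ / (b * (‖a‖ + ‖b‖ : ℝ)) * b = a * ‖a‖ / (‖a‖ + ‖b‖ : ℝ) := by
      field_simp
      push_cast
      ring
    rw [hdiff, norm_div, norm_mul, norm_mul, norm_div, norm_mul, norm_mul, hnorm_sum,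
      Complex.norm_real, Complex.norm_real, norm_norm, norm_norm]
    field_simp

lemma exists_norm_lt_one_norm_add_sq_mul_eq (a t : ℂ) :
    ∃ r : ℂ, ‖r‖ < 1 ∧ ‖a + r ^ 2 * t‖ = ‖2 * r * a‖ := by
  rcases eq_or_ne a 0 with rfl | ha
  · exact ⟨0, by simp, by simp⟩
  have ha' : 0 < ‖a‖ := norm_pos_iff.mpr ha
  set τ := ‖t‖ / ‖a‖ with hτ
  have hτ0 : 0 ≤ τ := div_nonneg (norm_nonneg t) ha'.le
  obtain ⟨ω, hω, hωt⟩ : ∃ ω : ℂ, ‖ω‖ = 1 ∧ ω ^ 2 * t = -(τ * a) := by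
    refine exists_norm_eq_one_sq_mul_eq ?_
    rw [norm_neg, norm_mul, Complex.norm_real, Real.norm_of_nonneg hτ0, hτ,
      div_mul_cancel₀ _ ha'.ne']
  set ρ := 1 / (1 + √(1 + τ)) with hρ
  have hden : 1 < 1 + √(1 + τ) := lt_add_of_pos_right 1 (Real.sqrt_pos.mpr (by linarith))
  have hρ0 : 0 < ρ := one_div_pos.mpr (one_pos.trans hden)
  have hρ1 : ρ < 1 := (div_lt_one (one_pos.trans hden)).mpr hden
  have hquad : 1 - ρ ^ 2 * τ = 2 * ρ := by
    rw [hρ]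
    field_simp
    linear_combination Real.sq_sqrt (show 0 ≤ 1 + τ by linarith)
  refine ⟨ω * ρ, ?_, ?_⟩
  · rwa [norm_mul, hω, one_mul, Complex.norm_real, Real.norm_of_nonneg hρ0.le]
  · have hfactor : a + (ω * ρ) ^ 2 * t = (1 - ρ ^ 2 * τ : ℝ) * a := by
      push_cast
      linear_combination (ρ : ℂ) ^ 2 * hωt
    rw [hfactor, hquad]
    simp [hω]

lemma exists_norm_lt_one_norm_eq (a b t : ℂ) :
    ∃ r s : ℂ, ‖r‖ < 1 ∧ ‖s‖ < 1 ∧ ‖a - (r + s) * b + r * s * t‖ = ‖-(r + s) * a + r * s * b‖ := by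
  rcases eq_or_ne b 0 with rfl | hb
  · obtain ⟨r, hr, heq⟩ := exists_norm_lt_one_norm_add_sq_mul_eq a t
    refine ⟨r, r, hr, hr, ?_⟩
    rw [mul_zero, sub_zero, mul_zero, add_zero, neg_mul, norm_neg, ← two_mul, ← sq, heq]
  · obtain ⟨r, hr, heq⟩ := exists_norm_lt_one_norm_eq_of_ne_zero a hb
    refine ⟨r, 0, hr, norm_zero.trans_lt one_pos, ?_⟩
    rw [add_zero, mul_zero, zero_mul, add_zero, zero_mul, add_zero, heq, neg_mul, norm_neg]

lemma exists_smul_add_conj_eq_zero (L : ℂ[X] →ₗ[ℂ] ℂ) {q : ℂ[X]}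
    (hq : ‖L q‖ = ‖L (Polynomial.X * q)‖) :
    ∃ ω : ℂ, ω ≠ 0 ∧ L (ω • q) + conj (L (Polynomial.X * ω • q)) = 0 := by
  obtain ⟨ω, hω, hωL⟩ : ∃ ω : ℂ, ‖ω‖ = 1 ∧ ω ^ 2 * L q = -conj (L (Polynomial.X * q)) :=
    exists_norm_eq_one_sq_mul_eq (by rw [norm_neg, Complex.norm_conj, hq])
  have hω0 : ω ≠ 0 := norm_ne_zero_iff.mp (hω ▸ one_ne_zero)
  refine ⟨ω, hω0, ?_⟩
  rw [mul_smul_comm, map_smul, map_smul, smul_eq_mul, smul_eq_mul, map_mul,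
    ← Complex.inv_eq_conj hω]
  field_simp
  linear_combination hωL

lemma isSchurStable_X_pow_mul_X_sub_C_mul_X_sub_C (m : ℕ) {r s : ℂ} (hr : ‖r‖ < 1)
    (hs : ‖s‖ < 1) :
    IsSchurStable
      (Polynomial.X ^ m * (Polynomial.X - Polynomial.C r) * (Polynomial.X - Polynomial.C s)) := by
  intro w hw
  rw [Polynomial.root_mul, Polynomial.root_mul, Polynomial.root_X_sub_C,
    Polynomial.root_X_sub_C] at hw
  rcases hw with (hw | rfl) | rfl
  · rw [Polynomial.IsRoot, Polynomial.eval_pow, Polynomial.eval_X] at hw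
    rw [eq_zero_of_pow_eq_zero hw, norm_zero]
    exact one_pos
  · exact hr
  · exact hs

/- Looking for `p` in the form `ω Xᵐ (X - r) (X - s)` leaves one condition on the unit `ω`, which
is solvable as soon as `‖L p‖ = ‖L (X p)‖`. -/
lemma exists_isSchurStable_add_conj_eq_zero (L : ℂ[X] →ₗ[ℂ] ℂ) (m : ℕ)
    (hL : L (Polynomial.X ^ (m + 3)) = 0) :
    ∃ p : ℂ[X], IsSchurStable p ∧ p.natDegree = m + 2 ∧
      L p + conj (L (Polynomial.X * p)) = 0 := by
  obtain ⟨r, s, hr, hs, hnorm⟩ := exists_norm_lt_one_norm_eq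
    (L (Polynomial.X ^ (m + 2))) (L (Polynomial.X ^ (m + 1))) (L (Polynomial.X ^ m))
  set q : ℂ[X] := Polynomial.X ^ m * (Polynomial.X - Polynomial.C r) *
    (Polynomial.X - Polynomial.C s) with hq
  have hLX (k : ℕ) : L (Polynomial.X ^ k * q) =
      L (Polynomial.X ^ (m + k + 2)) - (r + s) * L (Polynomial.X ^ (m + k + 1)) +
        r * s * L (Polynomial.X ^ (m + k)) := by
    have hexpand : Polynomial.X ^ k * q = Polynomial.X ^ (m + k + 2) -
        (r + s) • Polynomial.X ^ (m + k + 1) + (r * s) • Polynomial.X ^ (m + k) := by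
      simp only [hq, Polynomial.smul_eq_C_mul, Polynomial.C_add, Polynomial.C_mul]
      ring
    rw [hexpand, map_add, map_sub, map_smul, map_smul, smul_eq_mul, smul_eq_mul]
  have hLq : ‖L q‖ = ‖L (Polynomial.X * q)‖ := by
    have h0 := hLX 0
    have h1 := hLX 1
    rw [pow_zero, one_mul] at h0
    rw [pow_one, hL, zero_sub, ← neg_mul] at h1
    rw [h0, h1]
    exact hnorm
  obtain ⟨ω, hω, hωL⟩ := exists_smul_add_conj_eq_zero L hLq
  refine ⟨ω • q, fun w hw ↦ ?_, ?_, hωL⟩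
  · refine isSchurStable_X_pow_mul_X_sub_C_mul_X_sub_C m hr hs w ?_
    rwa [Polynomial.IsRoot, Polynomial.eval_smul, smul_eq_zero_iff_right hω] at hw
  · rw [Polynomial.natDegree_smul q hω, hq]
    compute_degree!

end KernelElement

section CircleQuadrature

lemma eq_zero_of_apply_eq_zero_of_apply_X_mul_eq_zero {K : Type*} [Field K] (L : K[X] →ₗ[K] K)
    {g h : K[X]} (hg : g ≠ 0) (hL : L g = 0) (hXL : L (Polynomial.X * g) = 0)
    (hdeg : (g * h).natDegree ≤ g.natDegree + 1) : L (g * h) = 0 := by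
  rcases eq_or_ne h 0 with rfl | hh
  · rw [mul_zero, map_zero]
  rw [Polynomial.natDegree_mul hg hh, add_le_add_iff_left] at hdeg
  obtain ⟨a, b, rfl⟩ := Polynomial.exists_eq_X_add_C_of_natDegree_le_one hdeg
  have hexpand : g * (Polynomial.C a * Polynomial.X + Polynomial.C b) =
      a • (Polynomial.X * g) + b • g := by
    rw [Polynomial.smul_eq_C_mul, Polynomial.smul_eq_C_mul]
    ring
  rw [hexpand, map_add, map_smul, map_smul, hL, hXL, smul_zero, smul_zero, add_zero]

lemma exists_circle_quadrature {L : ℂ[X] →ₗ[ℂ] ℂ} {m : ℕ} (hL : L (Polynomial.X ^ (m + 3)) = 0)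
    (hself : ∀ q, L (conjReflect (m + 3) q) = conj (L q)) :
    ∃ (s : Finset ℂ) (c : ℂ → ℂ), s.card = m + 2 ∧ (∀ t ∈ s, ‖t‖ = 1) ∧
      ∀ q : ℂ[X], q.natDegree ≤ m + 3 → L q = ∑ t ∈ s, c t * q.eval t := by
  obtain ⟨p, hp, hdeg, hLp⟩ := exists_isSchurStable_add_conj_eq_zero L m hL
  have hdeg0 : p.natDegree ≠ 0 := by omega
  set g := p + conjReflect p.natDegree p with hg
  have hgdeg : g.natDegree = m + 2 := (hp.natDegree_add_conjReflect hdeg0).trans hdeg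
  have hg0 : g ≠ 0 := Polynomial.ne_zero_of_natDegree_gt (n := 0) (by omega)
  have hLstar : L (conjReflect p.natDegree p) = conj (L (Polynomial.X * p)) := by
    rw [← hself, hdeg, conjReflect_succ_X_mul hdeg.le]
  have hLXstar : L (Polynomial.X * conjReflect p.natDegree p) = conj (L p) := by
    rw [← hself, hdeg, conjReflect_succ hdeg.le]
  have hLg : L g = 0 := by rw [hg, map_add, hLstar, hLp]
  have hLXg : L (Polynomial.X * g) = 0 := by
    rw [hg, mul_add, map_add, hLXstar, ← Complex.conj_conj (L (Polynomial.X * p)), ← map_add,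
      add_comm, hLp, map_zero]
  have hnodup : g.roots.Nodup := hp.nodup_roots_add_conjReflect hdeg0
  obtain ⟨c, hc⟩ := exists_eq_sum_eval_roots L (N := m + 3) (IsAlgClosed.splits g) hg0 hnodup
    fun h hh ↦ eq_zero_of_apply_eq_zero_of_apply_X_mul_eq_zero L hg0 hLg hLXg (by rwa [hgdeg])
  refine ⟨g.roots.toFinset, c, ?_, fun t ht ↦ ?_, hc⟩
  · rw [Multiset.toFinset_card_of_nodup hnodup, IsAlgClosed.card_roots_eq_natDegree, hgdeg]
  · exact hp.norm_eq_one_of_isRoot_add_conjReflect hdeg0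
      (Polynomial.isRoot_of_mem_roots (Multiset.mem_toFinset.mp ht))

end CircleQuadrature

section CirclePoly

variable {f : MvPolynomial (Fin 2) ℝ} {d : ℕ}

lemma aeval_mul_of_isHomogeneous {σ R A : Type*} [CommSemiring R] [CommSemiring A] [Algebra R A]
    {f : MvPolynomial σ R} (hf : f.IsHomogeneous d) (c : A) (x : σ → A) :
    aeval (fun i ↦ c * x i) f = c ^ d * aeval x f := by
  rw [aeval_def, aeval_def, eval₂_eq, eval₂_eq, Finset.mul_sum]
  refine Finset.sum_congr rfl fun m hm ↦ ?_
  have hdeg : ∑ i ∈ m.support, m i = d := by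
    rw [← Finsupp.degree_apply, Finsupp.degree_eq_weight_one]
    exact hf (mem_support_iff.mp hm)
  rw [Finset.prod_congr rfl fun i _ ↦ mul_pow c (x i) (m i), Finset.prod_mul_distrib,
    Finset.prod_pow_eq_pow_sum, hdeg, mul_left_comm]

lemma algHom_aeval_pair {R A B : Type*} [CommSemiring R] [CommSemiring A] [CommSemiring B]
    [Algebra R A] [Algebra R B] (φ : A →ₐ[R] B) (x y : A) (f : MvPolynomial (Fin 2) R) :
    φ (aeval ![x, y] f) = aeval ![φ x, φ y] f := by
  rw [comp_aeval_apply]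
  congr 2
  ext i
  fin_cases i <;> rfl

lemma conj_aeval_pair (f : MvPolynomial (Fin 2) ℝ) (x y : ℂ) :
    conj (aeval ![x, y] f) = aeval ![conj x, conj y] f :=
  algHom_aeval_pair Complex.conjAe.toAlgHom x y f

/-- The polynomial `W ↦ f (z W + conj z, W + 1)`: the real binary form `f` dehomogenized in the
coordinate that sends the points `z` and `conj z` of the projective line to `∞` and `0`. When `z`
is not real, this coordinate maps the real projective line to the unit circle. -/
def circlePoly (z : ℂ) (f : MvPolynomial (Fin 2) ℝ) : ℂ[X] :=
  aeval ![Polynomial.C z * Polynomial.X + Polynomial.C (conj z), Polynomial.X + 1] f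

lemma eval_circlePoly (z w : ℂ) (f : MvPolynomial (Fin 2) ℝ) :
    (circlePoly z f).eval w = aeval ![z * w + conj z, w + 1] f := by
  have h := algHom_aeval_pair ((Polynomial.aeval w).restrictScalars ℝ)
    (Polynomial.C z * Polynomial.X + Polynomial.C (conj z)) (Polynomial.X + 1) f
  simpa [circlePoly, Polynomial.coe_aeval_eq_eval] using h

lemma eval_homogenize_circlePoly (hf : f.IsHomogeneous d) (z a b : ℂ) :
    eval ![a, b] ((circlePoly z f).homogenize d) = aeval ![z * a + conj z * b, a + b] f := by
  set F : MvPolynomial (Fin 2) ℂ := aeval ![C z * X 0 + C (conj z) * X 1, X 0 + X 1] f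
  have hFhom : F.IsHomogeneous d := by
    rw [← one_mul d]
    refine hf.aeval _ (Fin.forall_fin_two.mpr ⟨?_, ?_⟩)
    · exact (isHomogeneous_C_mul_X z 0).add (isHomogeneous_C_mul_X (conj z) 1)
    · exact (isHomogeneous_X ℂ 0).add (isHomogeneous_X ℂ 1)
  have hF_aeval {A : Type} [CommRing A] [Algebra ℂ A] (u v : A) :
      aeval ![u, v] F =
        aeval ![algebraMap ℂ A z * u + algebraMap ℂ A (conj z) * v, u + v] f := by
    have h := algHom_aeval_pair ((aeval ![u, v]).restrictScalars ℝ)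
      (C z * X 0 + C (conj z) * X 1) (X 0 + X 1 : MvPolynomial (Fin 2) ℂ) f
    simpa only [AlgHom.restrictScalars_apply, map_add, map_mul, aeval_C, aeval_X,
      Matrix.cons_val_zero, Matrix.cons_val_one] using h
  have hdehom : aeval ![Polynomial.X, 1] F = circlePoly z f := by
    rw [hF_aeval, mul_one, circlePoly, Polynomial.algebraMap_eq]
  rw [Polynomial.homogenize_eq_of_isHomogeneous hFhom hdehom, ← coe_aeval_eq_eval]
  exact hF_aeval a b

lemma natDegree_circlePoly_le (hf : f.IsHomogeneous d) (z : ℂ) :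
    (circlePoly z f).natDegree ≤ d := by
  have h := aeval_natDegree_le (map (algebraMap ℝ ℂ) f) (hf.map _).totalDegree_le
    ![Polynomial.C z * Polynomial.X + Polynomial.C (conj z), Polynomial.X + 1]
    (Fin.forall_fin_two.mpr
      ⟨Polynomial.natDegree_linear_le, (Polynomial.natDegree_X_add_C (1 : ℂ)).le⟩)
  rwa [mul_one, aeval_map_algebraMap] at h

lemma conjReflect_circlePoly (hf : f.IsHomogeneous d) (z : ℂ) :
    conjReflect d (circlePoly z f) = circlePoly z f := by
  refine Polynomial.eq_of_infinite_eval_eq _ _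
    ((Set.finite_singleton (0 : ℂ)).infinite_compl.mono fun w hw ↦ ?_)
  have hw : w ≠ 0 := hw
  rw [Set.mem_ofPred_eq, eval_conjReflect (natDegree_circlePoly_le hf z) hw,
    eval_circlePoly, eval_circlePoly, conj_aeval_pair, ← aeval_mul_of_isHomogeneous hf]
  congr 2
  refine _root_.funext (Fin.forall_fin_two.mpr ?_)
  simp only [Matrix.cons_val_zero, Matrix.cons_val_one, map_add, map_mul, map_inv₀,
    Complex.conj_conj, map_one]
  constructor <;> field_simp <;> ring

lemma coeff_circlePoly_eq_zero (hf : f.IsHomogeneous d) {z : ℂ} (hz : aeval ![z, 1] f = 0) :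
    (circlePoly z f).coeff d = 0 := by
  rw [← conjReflect_circlePoly hf, coeff_conjReflect le_rfl, Nat.sub_self,
    Polynomial.coeff_zero_eq_eval_zero, eval_circlePoly, conj_aeval_pair]
  simpa using hz

end CirclePoly

section ComplexDecomposition

variable {f : MvPolynomial (Fin 2) ℝ} {d : ℕ}

lemma eval_lin (a b x y : ℝ) : eval ![x, y] (lin a b) = a * x + b * y := by
  simp [lin]

lemma hasDecomp_of_complex {ι : Type*} {s : Finset ι} {c : ι → ℂ} {a b : ι → ℝ}
    (hab : ∀ i ∈ s, (a i, b i) ≠ (0, 0))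
    (h : ∀ x y : ℝ, (eval ![x, y] f : ℂ) = ∑ i ∈ s, c i * ((a i * x + b i * y : ℝ) : ℂ) ^ d) :
    HasDecomp f d s.card := by
  refine ⟨fun j ↦ (c (s.equivFin.symm j)).re, fun j ↦ a (s.equivFin.symm j),
    fun j ↦ b (s.equivFin.symm j), fun j ↦ hab _ (s.equivFin.symm j).2, ?_⟩
  rw [s.equivFin.symm.sum_comp fun i : s ↦ C (c i).re * lin (a i) (b i) ^ d,
    s.sum_coe_sort fun i ↦ C (c i).re * lin (a i) (b i) ^ d]
  refine MvPolynomial.funext fun v ↦ ?_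
  have hv : v = ![v 0, v 1] := _root_.funext (Fin.forall_fin_two.mpr ⟨rfl, rfl⟩)
  rw [hv, ← Complex.ofReal_re (eval ![v 0, v 1] f), h, Complex.re_sum, map_sum]
  refine Finset.sum_congr rfl fun i _ ↦ ?_
  rw [map_mul, map_pow, eval_C, eval_lin, ← Complex.ofReal_pow, Complex.re_mul_ofReal]

lemma mul_sq_add_conj {α : ℂ} (hα : ‖α‖ = 1) (κ : ℂ) :
    κ * α ^ 2 + conj κ = α * (2 * (κ * α).re : ℝ) := by
  have hα_conj : α * conj α = 1 := by rw [Complex.mul_conj', hα, Complex.ofReal_one, one_pow]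
  rw [Complex.ofReal_mul, Complex.re_eq_add_conj, map_mul, Complex.ofReal_ofNat]
  linear_combination -conj κ * hα_conj

lemma sub_conj_ne_zero {z : ℂ} (hz : z.im ≠ 0) : z - conj z ≠ 0 :=
  sub_ne_zero.mpr fun h ↦ hz (Complex.conj_eq_iff_im.mp h.symm)

/-- The coordinate `κ` of the real point `(x, y)` in the basis `(z, 1)`, `(conj z, 1)` of `ℂ²`,
that is, `(x, y) = κ (z, 1) + conj κ (conj z, 1)`, for `z` not real. -/
def conjCoord (z : ℂ) (x y : ℝ) : ℂ :=
  (x - conj z * y) / (z - conj z)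

lemma conj_conjCoord (z : ℂ) (x y : ℝ) :
    conj (conjCoord z x y) = (z * y - x) / (z - conj z) := by
  rw [conjCoord, map_div₀, map_sub, map_sub, map_mul, Complex.conj_conj, Complex.conj_ofReal,
    Complex.conj_ofReal, ← neg_sub z, div_neg, ← neg_div, neg_sub]

lemma mul_conjCoord_add_conj {z : ℂ} (hz : z.im ≠ 0) (x y : ℝ) :
    z * conjCoord z x y + conj z * conj (conjCoord z x y) = x := by
  have hzz := sub_conj_ne_zero hz
  rw [conj_conjCoord, conjCoord]
  field_simp
  ring

lemma conjCoord_add_conj {z : ℂ} (hz : z.im ≠ 0) (x y : ℝ) :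
    conjCoord z x y + conj (conjCoord z x y) = y := by
  have hzz := sub_conj_ne_zero hz
  rw [conj_conjCoord, conjCoord]
  field_simp
  ring

/- Writing `t = α²` with `‖α‖ = 1`, the left-hand side is `2 α Re (κ α)`, and `Re (κ α)` is a real
linear form in `(x, y)`. -/
lemma exists_conjCoord_mul_add_conj_eq {z t : ℂ} (hz : z.im ≠ 0) (ht : ‖t‖ = 1) :
    ∃ (γ : ℂ) (a b : ℝ), (a, b) ≠ (0, 0) ∧ ∀ x y : ℝ,
      conjCoord z x y * t + conj (conjCoord z x y) = γ * (a * x + b * y : ℝ) := by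
  obtain ⟨α, rfl⟩ := IsAlgClosed.exists_pow_nat_eq t two_pos
  have hα : ‖α‖ = 1 := by
    rwa [norm_pow, pow_eq_one_iff_of_nonneg (norm_nonneg α) two_ne_zero] at ht
  have hα0 : α ≠ 0 := norm_ne_zero_iff.mp (hα ▸ one_ne_zero)
  set β := α / (z - conj z) with hβ
  refine ⟨2 * α, β.re, -(β * conj z).re, fun h ↦ ?_, fun x y ↦ ?_⟩
  · obtain ⟨hre, hre'⟩ := Prod.mk_eq_zero.mp h
    rw [neg_eq_zero, Complex.mul_re, hre, zero_mul, zero_sub, Complex.conj_im, mul_neg, neg_neg,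
      mul_eq_zero, or_iff_left hz] at hre'
    exact div_ne_zero hα0 (sub_conj_ne_zero hz) (Complex.ext hre hre')
  · have hκα : conjCoord z x y * α = β * x - β * conj z * y := by
      rw [conjCoord, hβ]
      ring
    rw [mul_sq_add_conj hα, hκα, Complex.sub_re, Complex.re_mul_ofReal, Complex.re_mul_ofReal]
    push_cast
    ring

lemma hasDecomp_of_nonreal_root {m : ℕ} (hf : f.IsHomogeneous (m + 3)) {z : ℂ} (hz : z.im ≠ 0)
    (hroot : aeval ![z, 1] f = 0) : HasDecomp f (m + 3) (m + 2) := by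
  obtain ⟨s, c, hcard, hs, hquad⟩ := exists_circle_quadrature
    (L := apolar (m + 3) (circlePoly z f))
    (by rw [apolar_X_pow, coeff_circlePoly_eq_zero hf hroot])
    fun q ↦ by rw [← apolar_conjReflect, conjReflect_circlePoly hf]
  choose! γ a b hab hform using fun t ht ↦ exists_conjCoord_mul_add_conj_eq hz (hs t ht)
  rw [← hcard]
  refine hasDecomp_of_complex (c := fun t ↦ c t * γ t ^ (m + 3)) hab fun x y ↦ ?_
  set κ := conjCoord z x y with hκ
  calc (eval ![x, y] f : ℂ) = aeval ![z * κ + conj z * conj κ, κ + conj κ] f := by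
        rw [hκ, mul_conjCoord_add_conj hz, conjCoord_add_conj hz]
        exact algHom_aeval_pair Complex.ofRealAm x y f
    _ = apolar (m + 3) (circlePoly z f)
          ((Polynomial.C κ * Polynomial.X + Polynomial.C (conj κ)) ^ (m + 3)) := by
        rw [apolar_linear_pow, eval_homogenize_circlePoly hf]
    _ = ∑ t ∈ s, c t * (κ * t + conj κ) ^ (m + 3) := by
        rw [hquad _ (by compute_degree)]
        simp
    _ = ∑ t ∈ s, c t * γ t ^ (m + 3) * ((a t * x + b t * y : ℝ) : ℂ) ^ (m + 3) :=
        Finset.sum_congr rfl fun t ht ↦ by rw [hform t ht x y, mul_pow, mul_assoc]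

end ComplexDecomposition

section LinearFactors

variable {d : ℕ}

lemma exists_eq_prod_C_mul_X_add_C {K : Type*} [Field K] {p : K[X]} (hp : p.Splits) (hd : 1 ≤ d)
    (hdeg : p.natDegree ≤ d) :
    ∃ a b : Fin d → K, p = ∏ j, (Polynomial.C (a j) * Polynomial.X + Polynomial.C (b j)) := by
  induction d, hd using Nat.le_induction generalizing p with
  | base =>
    obtain ⟨a, b, rfl⟩ := Polynomial.exists_eq_X_add_C_of_natDegree_le_one hdeg
    exact ⟨fun _ ↦ a, fun _ ↦ b, by simp⟩
  | succ n hn ih =>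
    rcases Nat.le_or_eq_of_le_succ hdeg with hle | heq
    · obtain ⟨a, b, hab⟩ := ih hp hle
      exact ⟨Fin.cons 0 a, Fin.cons 1 b, by simpa [Fin.prod_univ_succ] using hab⟩
    · have hp0 : p ≠ 0 := Polynomial.ne_zero_of_natDegree_gt (n := 0) (by omega)
      obtain ⟨t, ht⟩ := hp.exists_eval_eq_zero
        (Polynomial.natDegree_pos_iff_degree_pos.mp (by omega)).ne'
      obtain ⟨q, rfl⟩ := Polynomial.dvd_iff_isRoot.mpr ht
      rw [Polynomial.natDegree_mul (Polynomial.X_sub_C_ne_zero t) (right_ne_zero_of_mul hp0),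
        Polynomial.natDegree_X_sub_C] at heq
      obtain ⟨a, b, hab⟩ := ih (hp.of_dvd hp0 (dvd_mul_left q _)) (by omega)
      refine ⟨Fin.cons 1 a, Fin.cons (-t) b, ?_⟩
      rw [Fin.prod_univ_succ]
      simp [← hab, sub_eq_add_neg]

lemma isHomogeneous_lin (a b : ℝ) : (lin a b).IsHomogeneous 1 :=
  (isHomogeneous_C_mul_X a 0).add (isHomogeneous_C_mul_X b 1)

lemma exists_eq_prod_lin {f : MvPolynomial (Fin 2) ℝ} (hf : f.IsHomogeneous d) (hd : 1 ≤ d)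
    (hsplits : (aeval ![(Polynomial.X : ℝ[X]), 1] f).Splits) :
    ∃ a b : Fin d → ℝ, f = ∏ j, lin (a j) (b j) := by
  have hdeg : (aeval ![(Polynomial.X : ℝ[X]), 1] f).natDegree ≤ d := by
    have h := aeval_natDegree_le f hf.totalDegree_le ![(Polynomial.X : ℝ[X]), 1]
      (Fin.forall_fin_two.mpr
        ⟨Polynomial.natDegree_X_le, Polynomial.natDegree_one.le.trans zero_le_one⟩)
    rwa [mul_one] at h
  obtain ⟨a, b, hab⟩ := exists_eq_prod_C_mul_X_add_C hsplits hd hdeg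
  have hprod : (∏ j, lin (a j) (b j)).IsHomogeneous d := by
    simpa using IsHomogeneous.prod Finset.univ _ (fun _ : Fin d ↦ 1)
      fun j _ ↦ isHomogeneous_lin (a j) (b j)
  have hdehom : aeval ![(Polynomial.X : ℝ[X]), 1] (∏ j, lin (a j) (b j)) =
      aeval ![(Polynomial.X : ℝ[X]), 1] f := by
    rw [hab, map_prod]
    simp [lin, Polynomial.algebraMap_eq]
  refine ⟨a, b, ?_⟩
  rw [← Polynomial.homogenize_eq_of_isHomogeneous hf rfl,
    Polynomial.homogenize_eq_of_isHomogeneous hprod hdehom]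

lemma lin_zero_zero : lin 0 0 = 0 := by
  simp [lin]

lemma lin_mul_C (a b r : ℝ) : lin a b * C r = lin (a * r) (b * r) := by
  simp only [lin, C_mul]
  ring

lemma lin_dvd_lin {a b a' b' : ℝ} (hab : (a, b) ≠ (0, 0)) (h : a * b' = a' * b) :
    lin a b ∣ lin a' b' := by
  have hnorm : a * a + b * b ≠ 0 := fun h0 ↦
    hab (Prod.mk_eq_zero.mpr (mul_self_add_mul_self_eq_zero.mp h0))
  have ha' : a * ((a * a' + b * b') / (a * a + b * b)) = a' := by
    rw [mul_div_assoc', div_eq_iff hnorm]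
    linear_combination b * h
  have hb' : b * ((a * a' + b * b') / (a * a + b * b)) = b' := by
    rw [mul_div_assoc', div_eq_iff hnorm]
    linear_combination -a * h
  exact ⟨C ((a * a' + b * b') / (a * a + b * b)), by rw [lin_mul_C, ha', hb']⟩

lemma not_isUnit_map_lin (a b : ℝ) : ¬IsUnit (map (algebraMap ℝ ℂ) (lin a b)) := by
  intro h
  have h0 : eval ![(b : ℂ), -a] (map (algebraMap ℝ ℂ) (lin a b)) = 0 := by
    simp [lin, mul_comm]
  exact (h.map (eval ![(b : ℂ), -a])).ne_zero h0

lemma splitsDistinct_of_eq_prod_lin {f : MvPolynomial (Fin 2) ℝ} (hsf : SquarefreeC f)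
    {a b : Fin d → ℝ} (hprod : f = ∏ j, lin (a j) (b j)) : SplitsDistinct f d := by
  have hab (j : Fin d) : (a j, b j) ≠ (0, 0) := by
    intro h
    obtain ⟨ha, hb⟩ := Prod.mk_eq_zero.mp h
    apply hsf.ne_zero
    rw [hprod, Finset.prod_eq_zero (Finset.mem_univ j) (by rw [ha, hb, lin_zero_zero]), map_zero]
  refine ⟨a, b, hab, fun i j hij h ↦ ?_, hprod⟩
  have hpair : lin (a i) (b i) * lin (a j) (b j) ∣ f := by
    rw [hprod, ← Finset.prod_pair hij (f := fun k ↦ lin (a k) (b k))]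
    exact Finset.prod_dvd_prod_of_subset _ _ _ (Finset.subset_univ _)
  have hsq : lin (a i) (b i) * lin (a i) (b i) ∣ f :=
    (mul_dvd_mul_left _ (lin_dvd_lin (hab i) h)).trans hpair
  apply not_isUnit_map_lin (a i) (b i) (hsf _ _)
  rw [← map_mul]
  exact map_dvd _ hsq

end LinearFactors

lemma splits_of_forall_root_real {p : ℝ[X]} (h : ∀ z : ℂ, Polynomial.aeval z p = 0 → z.im = 0) :
    p.Splits := by
  refine Polynomial.Splits.of_splits_map (algebraMap ℝ ℂ) (IsAlgClosed.splits _) fun z hz ↦ ?_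
  exact ⟨z.re, Complex.conj_eq_iff_re.mp (Complex.conj_eq_iff_im.mpr (h z
    (Polynomial.mem_aroots'.mp hz).2))⟩

lemma exists_nonreal_root_of_not_splitsDistinct {d : ℕ} (hd : 1 ≤ d) {f : MvPolynomial (Fin 2) ℝ}
    (hf : f.IsHomogeneous d) (hsf : SquarefreeC f) (h : ¬SplitsDistinct f d) :
    ∃ z : ℂ, z.im ≠ 0 ∧ aeval ![z, 1] f = 0 := by
  by_contra! hreal
  have hsplits : (aeval ![(Polynomial.X : ℝ[X]), 1] f).Splits := by
    refine splits_of_forall_root_real fun z hz ↦ ?_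
    rw [algHom_aeval_pair (Polynomial.aeval z), Polynomial.aeval_X, map_one] at hz
    exact not_imp_not.mp (hreal z) hz
  obtain ⟨a, b, hprod⟩ := exists_eq_prod_lin hf hd hsplits
  exact h (splitsDistinct_of_eq_prod_lin hsf hprod)

theorem stmt10_general (d : ℕ) (hd3 : 3 ≤ d) (f : MvPolynomial (Fin 2) ℝ)
    (hf : f.IsHomogeneous d) (hsf : SquarefreeC f) (hrank : realRank f d = d) :
    SplitsDistinct f d := by
  by_contra h
  obtain ⟨z, hz, hroot⟩ := exists_nonreal_root_of_not_splitsDistinct (by omega) hf hsf h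
  obtain ⟨m, rfl⟩ := Nat.exists_eq_add_of_le' hd3
  have hle : realRank f (m + 3) ≤ m + 2 := Nat.sInf_le (hasDecomp_of_nonreal_root hf hz hroot)
  omega

/-- let `f` be a real binary form of degree `d`, `3 ≤ d ≤ 5`, with
distinct complex roots. If the real rank of `f` is `d`, then `f` has `d` distinct
real roots, i.e. `f` is a product of `d` pairwise non-proportional real linear forms. -/
theorem stmt10 (d : ℕ) (hd3 : 3 ≤ d) (hd5 : d ≤ 5) (f : MvPolynomial (Fin 2) ℝ)
    (hf : f.IsHomogeneous d) (hsf : SquarefreeC f) (hrank : realRank f d = d) :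
    SplitsDistinct f d :=
  stmt10_general d hd3 f hf hsf hrank
end
end
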